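/- For every integer g ≥ 1, the number of pairs (x, y) ∈ ℤ² with |x| ≤ 3g, |y| ≤ 3g, |x| ≠ 3g, |y| ∉ {2g, 3g}, |x + y| ∉ {4g, 5g}, and |x − y| ∉ {4g, 5g} equals 36g² − 36g + 15. (This is the lattice-point count of the g-th dilate of the inside-out polytope P_{(2)} = ([−3,3] × [−3,3]) ∖ {x_1 = ±3, x_2 = ±3, x_2 = ±2, x_1 ± x_2 = ±4, x_1 ± x_2 = ±5}, which the paper identifies with L_{(2)}(g) = 24^g·g!·15·⟨τ_2τ_{3g−3}⟩_g = 36g² − 36g + 15.) -/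

import Mathlib

/-- The defining condition of the arrangement complement, on lattice points of the dilated square. -/
def IsAdmissible (g x y : ℤ) : Prop :=
  |x| ≠ 3 * g ∧ |y| ≠ 2 * g ∧ |y| ≠ 3 * g ∧ |x + y| ≠ 4 * g ∧ |x + y| ≠ 5 * g ∧
    |x - y| ≠ 4 * g ∧ |x - y| ≠ 5 * g

instance (g x y : ℤ) : Decidable (IsAdmissible g x y) := by
  unfold IsAdmissible; infer_instance

lemma isAdmissible_iff {g : ℤ} (hg : 1 ≤ g) (x y : ℤ) :
    IsAdmissible g x y ↔
      ¬(x = 3 * g ∨ x = -(3 * g)) ∧ ¬(y = 2 * g ∨ y = -(2 * g)) ∧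
      ¬(y = 3 * g ∨ y = -(3 * g)) ∧ ¬(x + y = 4 * g ∨ x + y = -(4 * g)) ∧
      ¬(x + y = 5 * g ∨ x + y = -(5 * g)) ∧ ¬(x - y = 4 * g ∨ x - y = -(4 * g)) ∧
      ¬(x - y = 5 * g ∨ x - y = -(5 * g)) := by
  simp only [IsAdmissible, ne_eq, abs_eq (show 0 ≤ 2 * g by omega),
    abs_eq (show 0 ≤ 3 * g by omega), abs_eq (show 0 ≤ 4 * g by omega),
    abs_eq (show 0 ≤ 5 * g by omega)]

/-- The admissible points on a horizontal line: a row of `6g - 1` interior points, from which `0`, `2`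
or `4` are removed according to the distance of the line from the axis. -/
lemma card_row {g : ℤ} (hg : 1 ≤ g) {y : ℤ} (hy : y ∈ Finset.Icc (-(3 * g)) (3 * g)) :
    (((Finset.Icc (-(3 * g)) (3 * g)).filter (fun x => IsAdmissible g x y)).card : ℤ) =
      (if y ∈ Finset.Icc (-g) g then 2 else 0) +
        (if y ∈ Finset.Ioo (-(2 * g)) (2 * g) then 2 else 0) +
        (if y ∈ Finset.Ioo (-(3 * g)) (3 * g) \ {2 * g, -(2 * g)} then 6 * g - 5 else 0) := by
  obtain ⟨a, ha, hya⟩ : ∃ a, 0 ≤ a ∧ (y = a ∨ y = -a) :=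
    ⟨|y|, abs_nonneg y, eq_or_eq_neg_of_abs_eq rfl⟩
  simp only [Finset.mem_Icc, Finset.mem_Ioo, Finset.mem_sdiff, Finset.mem_insert,
    Finset.mem_singleton] at hy ⊢
  have hrow : ((Finset.Ioo (-(3 * g)) (3 * g)).card : ℤ) = 6 * g - 1 := by
    rw [Int.card_Ioo]; omega
  by_cases hexc : a = 2 * g ∨ a = 3 * g
  · have hempty : (Finset.Icc (-(3 * g)) (3 * g)).filter (fun x => IsAdmissible g x y) = ∅ := by
      ext x
      simp only [Finset.mem_filter, isAdmissible_iff hg, Finset.notMem_empty, iff_false]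
      omega
    rw [hempty, if_neg (by omega), if_neg (by omega), if_neg (by omega)]
    simp
  obtain ⟨s, hs, hsub, hcard⟩ : ∃ s : Finset ℤ,
      (Finset.Icc (-(3 * g)) (3 * g)).filter (fun x => IsAdmissible g x y) =
        Finset.Ioo (-(3 * g)) (3 * g) \ s ∧ s ⊆ Finset.Ioo (-(3 * g)) (3 * g) ∧
      s.card = if a ≤ g then 0 else if a < 2 * g then 2 else 4 := by
    by_cases h₁ : a ≤ g
    · refine ⟨∅, ?_, by simp, by simp [h₁]⟩
      ext x
      simp only [Finset.mem_filter, isAdmissible_iff hg, Finset.mem_sdiff, Finset.mem_Ioo,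
        Finset.mem_Icc, Finset.notMem_empty, not_false_eq_true, and_true]
      omega
    by_cases h₂ : a < 2 * g
    · refine ⟨{4 * g - a, a - 4 * g}, ?_, ?_, ?_⟩
      · ext x
        simp only [Finset.mem_filter, isAdmissible_iff hg, Finset.mem_sdiff, Finset.mem_Ioo,
          Finset.mem_Icc, Finset.mem_insert, Finset.mem_singleton]
        omega
      · intro x
        simp only [Finset.mem_Ioo, Finset.mem_insert, Finset.mem_singleton]
        omega
      · rw [if_neg h₁, if_pos h₂, Finset.card_pair (by omega)]
    · refine ⟨{4 * g - a, a - 4 * g, 5 * g - a, a - 5 * g}, ?_, ?_, ?_⟩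
      · ext x
        simp only [Finset.mem_filter, isAdmissible_iff hg, Finset.mem_sdiff, Finset.mem_Ioo,
          Finset.mem_Icc, Finset.mem_insert, Finset.mem_singleton]
        omega
      · intro x
        simp only [Finset.mem_Ioo, Finset.mem_insert, Finset.mem_singleton]
        omega
      · rw [if_neg h₁, if_neg h₂, Finset.card_insert_of_notMem, Finset.card_insert_of_notMem,
          Finset.card_pair (by omega)]
        all_goals
          simp only [Finset.mem_insert, Finset.mem_singleton]
          omega
  rw [hs, Finset.cast_card_sdiff hsub, hrow, hcard]
  split_ifs <;> push_cast <;> omega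

/-- The number of lattice points in the `g`-th dilate of the inside-out polytope
`P₍₂₎ = ([-3,3] × [-3,3]) ∖ {x₁ = ±3, x₂ = ±3, x₂ = ±2, x₁ ± x₂ = ±4, x₁ ± x₂ = ±5}`,
i.e. the number of pairs `(x, y) ∈ ℤ²` with `|x| ≤ 3g`, `|y| ≤ 3g`, `|x| ≠ 3g`,
`|y| ∉ {2g, 3g}`, `|x + y| ∉ {4g, 5g}` and `|x - y| ∉ {4g, 5g}`, is `36g² - 36g + 15`. -/
theorem count_P2 (g : ℕ) (hg : 1 ≤ g) :
    (((Finset.Icc (-(3 * (g : ℤ))) (3 * (g : ℤ))) ×ˢ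
        (Finset.Icc (-(3 * (g : ℤ))) (3 * (g : ℤ)))).filter
      (fun p : ℤ × ℤ => |p.1| ≠ 3 * (g : ℤ) ∧ |p.2| ≠ 2 * (g : ℤ) ∧ |p.2| ≠ 3 * (g : ℤ) ∧
        |p.1 + p.2| ≠ 4 * (g : ℤ) ∧ |p.1 + p.2| ≠ 5 * (g : ℤ) ∧
        |p.1 - p.2| ≠ 4 * (g : ℤ) ∧ |p.1 - p.2| ≠ 5 * (g : ℤ))).card
      = 36 * g ^ 2 - 36 * g + 15 := by
  change (Finset.filter (fun p : ℤ × ℤ => IsAdmissible g p.1 p.2) _).card = _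
  have hg' : (1 : ℤ) ≤ g := by exact_mod_cast hg
  have hle : 36 * g ≤ 36 * g ^ 2 := by nlinarith
  zify [hle]
  rw [Finset.card_filter, Finset.sum_product_right]
  simp only [← Finset.card_filter]
  push_cast
  rw [Finset.sum_congr rfl fun y hy => card_row hg' hy]
  have hIcc : Finset.Icc (-(g : ℤ)) g ⊆ Finset.Icc (-(3 * (g : ℤ))) (3 * g) :=
    Finset.Icc_subset_Icc (by omega) (by omega)
  have hIoo : Finset.Ioo (-(2 * (g : ℤ))) (2 * g) ⊆ Finset.Icc (-(3 * (g : ℤ))) (3 * g) :=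
    Finset.Ioo_subset_Icc_self.trans (Finset.Icc_subset_Icc (by omega) (by omega))
  have hsdiff : Finset.Ioo (-(3 * (g : ℤ))) (3 * g) \ {2 * (g : ℤ), -(2 * (g : ℤ))} ⊆
      Finset.Icc (-(3 * (g : ℤ))) (3 * g) :=
    Finset.sdiff_subset.trans Finset.Ioo_subset_Icc_self
  have hpair : ({2 * (g : ℤ), -(2 * (g : ℤ))} : Finset ℤ) ⊆
      Finset.Ioo (-(3 * (g : ℤ))) (3 * g) := by
    intro x
    simp only [Finset.mem_Ioo, Finset.mem_insert, Finset.mem_singleton]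
    omega
  simp only [Finset.sum_add_distrib, Finset.sum_ite_mem, Finset.inter_eq_right.2 hIcc,
    Finset.inter_eq_right.2 hIoo, Finset.inter_eq_right.2 hsdiff, Finset.sum_const, nsmul_eq_mul,
    Finset.cast_card_sdiff hpair, Finset.card_pair (show 2 * (g : ℤ) ≠ -(2 * (g : ℤ)) by omega),
    Int.card_Icc, Int.card_Ioo]
  rw [Int.toNat_of_nonneg (by omega), Int.toNat_of_nonneg (by omega),
    Int.toNat_of_nonneg (by omega)]
  push_cast
  ring
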